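/- arXiv:1612.07262 — 2 statements merged into one kernel-verified Lean document; each statement's English description precedes it below -/
import Mathlib

section
/- (Recovery sequence for fixed α ∈ [0,4).) Let α ∈ [0,4), θ_α = arccos(α/4), and let θ : ℝ → {θ_α, −θ_α} be a 1-periodic piecewise constant function with exactly N jump points in [0,1). Then there exists a sequence of configurations θ_n : {0,…,n} → [−π/2, π/2] with θ_n^n = θ_n^0 whose piecewise-constant interpolations (extended 1-periodically) converge to θ in L¹_loc(ℝ) and such that limsup_{n→∞} E_n^α(θ_n) ≤ C_α · N. -/
/-!
Every bond energy is nonnegative, is invariant under a simultaneous change of sign of both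
angles, and vanishes when both angles equal `θ_α`. Off its jump set the limit function is
`v ∏_{s ∈ T} σ_s`, where `v = ± θ_α`, `σ_s` is `1` to the left of `s` and `-1` to its right, and
`T` is an even set of jump points (`sign_rep_per`). Given a competitor `ψ` for the crease energy
with transition length `M`, the recovery configuration replaces each `σ_s` by the rescaled profile
`-ψ / θ_α` placed immediately to the right of site `⌊ns⌋` (`recConfig`). For large `n` the profiles
do not overlap, so every bond is either free or, up to sign, a bond of one profile
(`recConfig_edge`); summing gives energy at most `|T| · creaseSum α ψ` (`recConfig_energy`), and
evenness of `|T|` gives periodicity. The interpolation agrees with the limit function except within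
`(2M + 1) / n` of the jumps.

The infimum defining `C_α` need not be attained, so a diagonal choice lets `ψ` depend on `n`,
approaching the infimum slowly enough that the profiles still do not overlap.
-/

open Real MeasureTheory Filter Topology
open scoped ENNReal

noncomputable section

/-- The minimal angle `θ_α = arccos (α/4)`. -/
def thetaMin (α : ℝ) : ℝ := Real.arccos (α / 4)

/-- The energy `E_n^α` of a configuration, with `m_α = −(α²/8 + 1)` (regime `0 ≤ α ≤ 4`). -/
def En (α : ℝ) (n : ℕ) (θ : ℕ → ℝ) : ℝ :=
  ∑ i ∈ Finset.range n,
    (Real.cos (θ i + θ (i + 1)) - α / 2 * (Real.cos (θ i) + Real.cos (θ (i + 1)))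
      + α ^ 2 / 8 + 1)

/-- A configuration: `θ^i ∈ [−π/2, π/2]` for `0 ≤ i ≤ n` and `θ^n = θ^0`. -/
def IsConfig (n : ℕ) (θ : ℕ → ℝ) : Prop :=
  (∀ i ≤ n, θ i ∈ Set.Icc (-(π / 2)) (π / 2)) ∧ θ n = θ 0

/-- Piecewise-constant interpolation on `[0,1)`: equal to `θ^i` on `[i/n, (i+1)/n)`. -/
def interp (n : ℕ) (θ : ℕ → ℝ) (t : ℝ) : ℝ := θ ⌊(n : ℝ) * t⌋₊

/-- Piecewise-constant interpolation extended `1`-periodically to `ℝ`. -/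
def interpPer (n : ℕ) (θ : ℕ → ℝ) (t : ℝ) : ℝ := θ ⌊(n : ℝ) * Int.fract t⌋₊

/-- A single summand of the crease (transition) energy. -/
def creaseSummand (α : ℝ) (θ : ℤ → ℝ) (i : ℤ) : ℝ :=
  Real.cos (θ i + θ (i + 1)) - α / 2 * (Real.cos (θ i) + Real.cos (θ (i + 1)))
    + α ^ 2 / 8 + 1

/-- The (nonnegative-termed) sum over `ℤ`, with values in `[0, ∞]`. -/
def creaseSum (α : ℝ) (θ : ℤ → ℝ) : ℝ≥0∞ :=
  ∑' i : ℤ, ENNReal.ofReal (creaseSummand α θ i)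

/-- The crease energy `C_α`: infimum over `N ∈ ℕ` and maps `θ : ℤ → [−π/2, π/2]` with
`θ^i = sign i · θ_α` for `|i| ≥ N` of the sum of the transition energy. -/
def crease (α : ℝ) : ℝ≥0∞ :=
  sInf { c : ℝ≥0∞ | ∃ (N : ℕ) (θ : ℤ → ℝ),
    (∀ i, θ i ∈ Set.Icc (-(π / 2)) (π / 2)) ∧
    (∀ i : ℤ, (N : ℤ) ≤ |i| → θ i = (i.sign : ℝ) * thetaMin α) ∧
    c = creaseSum α θ }

/-- `f` is locally constant at `s`. A point of `[0,1)` where a piecewise constant function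
fails to be locally constant is a jump point. -/
def IsLocallyConstantAt (f : ℝ → ℝ) (s : ℝ) : Prop :=
  ∃ ε > 0, ∀ t, |t - s| < ε → f t = f s

/-! ### Bond energy -/

/-- The energy of a single bond between neighbouring angles `x` and `y`; the summand of both
`En` and `creaseSum`. -/
def bondEnergy (α x y : ℝ) : ℝ :=
  Real.cos (x + y) - α / 2 * (Real.cos x + Real.cos y) + α ^ 2 / 8 + 1

/-- With `p = (x + y) / 2` and `q = (x - y) / 2` the bond energy is
`2 cos² p - α cos p cos q + α² / 8`, a quadratic in `cos p` of discriminant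
`α² (cos² q - 1) ≤ 0`. -/
lemma bondEnergy_nonneg (α x y : ℝ) : 0 ≤ bondEnergy α x y := by
  obtain ⟨p, q, rfl, rfl⟩ : ∃ p q : ℝ, x = p + q ∧ y = p - q :=
    ⟨(x + y) / 2, (x - y) / 2, by ring, by ring⟩
  have h1 : Real.cos (p + q + (p - q)) = 2 * Real.cos p ^ 2 - 1 := by
    rw [← Real.cos_two_mul]; ring_nf
  unfold bondEnergy
  rw [h1, Real.cos_add, Real.cos_sub]
  nlinarith [sq_nonneg (Real.cos p - α / 4 * Real.cos q), sq_nonneg (α * Real.sin q),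
    Real.sin_sq_add_cos_sq q]

lemma bondEnergy_neg (α x y : ℝ) : bondEnergy α (-x) (-y) = bondEnergy α x y := by
  unfold bondEnergy
  rw [← neg_add, Real.cos_neg, Real.cos_neg, Real.cos_neg]

lemma thetaMin_pos {α : ℝ} (hα : α ∈ Set.Ico (0 : ℝ) 4) : 0 < thetaMin α :=
  Real.arccos_pos.2 (by linarith [hα.2])

lemma thetaMin_le {α : ℝ} (hα : α ∈ Set.Ico (0 : ℝ) 4) : thetaMin α ≤ π / 2 :=
  Real.arccos_le_pi_div_two.2 (by linarith [hα.1])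

lemma bondEnergy_thetaMin {α : ℝ} (hα : α ∈ Set.Ico (0 : ℝ) 4) :
    bondEnergy α (thetaMin α) (thetaMin α) = 0 := by
  have h : Real.cos (thetaMin α) = α / 4 :=
    Real.cos_arccos (by linarith [hα.1]) (by linarith [hα.2])
  unfold bondEnergy
  rw [← two_mul, Real.cos_two_mul, h]
  ring

/-! ### Functions with finitely many jumps -/

lemma const_of_locConst {a : ℝ} {f : ℝ → ℝ} (hf : ∀ t, f t = a ∨ f t = -a) {I : Set ℝ}
    (hI : IsPreconnected I) (hloc : ∀ t ∈ I, IsLocallyConstantAt f t) {x y : ℝ} (hx : x ∈ I)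
    (hy : y ∈ I) : f x = f y := by
  refine hI.constant_of_mapsTo (T := {a, -a}) (Set.toFinite _).isDiscrete ?_ (fun t _ => hf t) hx hy
  intro t ht
  obtain ⟨ε, hε, h⟩ := hloc t ht
  refine ContinuousAt.continuousWithinAt ?_
  refine (continuousAt_const (y := f t)).congr ?_
  filter_upwards [Metric.ball_mem_nhds t hε] with u hu
  exact (h u (by simpa [Real.dist_eq] using hu)).symm

/-- A `±a`-valued function that is locally constant off a finite set is, off that set, a fixed
sign times a product of sign switches located at a subset `T` (the points where the function
really changes sign, not merely at the point itself). The induction removes one point `s` at a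
time, flipping the function to the right of `s` if it changes sign there. -/
lemma sign_rep {a : ℝ} (S : Finset ℝ) : ∀ f : ℝ → ℝ, (∀ t, f t = a ∨ f t = -a) →
    (∀ t ∈ Set.Ioo (0 : ℝ) 1, t ∉ S → IsLocallyConstantAt f t) →
    ∃ T ⊆ S, (∀ s ∈ T, s ∈ Set.Ioo (0 : ℝ) 1) ∧ ∃ v, (v = a ∨ v = -a) ∧
      ∀ t ∈ Set.Ioo (0 : ℝ) 1, t ∉ S → f t = v * ∏ s ∈ T, (if s < t then (-1 : ℝ) else 1) := by
  induction S using Finset.induction_on with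
  | empty =>
    intro f hf hloc
    refine ⟨∅, by simp, by simp, f (1 / 2), hf _, fun t ht _ => ?_⟩
    simpa using const_of_locConst hf isPreconnected_Ioo (fun t ht => hloc t ht (by simp)) ht
      (by norm_num : (1 / 2 : ℝ) ∈ Set.Ioo (0 : ℝ) 1)
  | insert s S hs ih =>
    intro f hf hloc
    by_cases hs1 : s ∈ Set.Ioo (0 : ℝ) 1
    swap
    · obtain ⟨T, hTS, hT1, v, hv, h⟩ := ih f hf (fun t ht htS => hloc t ht (by
        rw [Finset.mem_insert, not_or]
        exact ⟨fun h => hs1 (h ▸ ht), htS⟩))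
      exact ⟨T, hTS.trans (Finset.subset_insert _ _), hT1, v, hv,
        fun t ht htS => h t ht (fun h' => htS (Finset.mem_insert_of_mem h'))⟩
    obtain ⟨ε, hε, hball⟩ : ∃ ε > 0, Metric.ball s ε ⊆ Set.Ioo (0 : ℝ) 1 ∩ (↑S : Set ℝ)ᶜ :=
      Metric.isOpen_iff.1 (isOpen_Ioo.inter S.finite_toSet.isClosed.isOpen_compl) s ⟨hs1, hs⟩
    have hnear : ∀ t, |t - s| < ε → t ∈ Set.Ioo (0 : ℝ) 1 ∧ t ∉ S := fun t ht => by
      simpa using hball (show t ∈ Metric.ball s ε by simpa [Real.dist_eq] using ht)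
    have hnl : ∀ t, |t - s| < ε → t ≠ s → IsLocallyConstantAt f t := fun t ht hts =>
      hloc t (hnear t ht).1 (by simpa [hts] using (hnear t ht).2)
    have hL : ∀ t ∈ Set.Ioo (s - ε) s, f t = f (s - ε / 2) := fun t ht =>
      const_of_locConst hf isPreconnected_Ioo
        (fun u hu => hnl u (by rw [abs_lt]; constructor <;> linarith [hu.1, hu.2]) hu.2.ne) ht
        ⟨by linarith, by linarith⟩
    have hR : ∀ t ∈ Set.Ioo s (s + ε), f t = f (s + ε / 2) := fun t ht =>
      const_of_locConst hf isPreconnected_Ioo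
        (fun u hu => hnl u (by rw [abs_lt]; constructor <;> linarith [hu.1, hu.2]) hu.1.ne') ht
        ⟨by linarith, by linarith⟩
    obtain ⟨q, hq, hqLR⟩ : ∃ q : ℝ, (q = 1 ∨ q = -1) ∧ q * f (s + ε / 2) = f (s - ε / 2) := by
      rcases hf (s + ε / 2) with h1 | h1 <;> rcases hf (s - ε / 2) with h2 | h2 <;> rw [h1, h2]
      · exact ⟨1, by simp, by ring⟩
      · exact ⟨-1, by simp, by ring⟩
      · exact ⟨-1, by simp, by ring⟩
      · exact ⟨1, by simp, by ring⟩
    set g : ℝ → ℝ := fun t => if t < s then f t else if t = s then f (s - ε / 2) else q * f t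
      with hg
    have hgl : ∀ t, t < s → g t = f t := fun t ht => by simp [hg, ht]
    have hgs : g s = f (s - ε / 2) := by simp [hg]
    have hgr : ∀ t, s < t → g t = q * f t := fun t ht => by
      simp [hg, not_lt.2 ht.le, ht.ne']
    obtain ⟨T, hTS, hT1, v, hv, h⟩ := ih g
      (fun t => by
        rcases lt_trichotomy t s with ht | rfl | ht
        · rw [hgl t ht]; exact hf t
        · rw [hgs]; exact hf _
        · rw [hgr t ht]
          rcases hq with rfl | rfl <;> rcases hf t with h1 | h1 <;> rw [h1] <;> simp)
      (fun t ht htS => by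
        rcases lt_trichotomy t s with hts | rfl | hts
        · obtain ⟨d, hd, h⟩ := hloc t ht (by simp [htS, hts.ne])
          refine ⟨min d (s - t), lt_min hd (by linarith), fun u hu => ?_⟩
          have h1 := lt_of_lt_of_le hu (min_le_left _ _)
          have h2 := lt_of_lt_of_le hu (min_le_right _ _)
          rw [hgl u (by linarith [le_abs_self (u - t)]), hgl t hts, h u h1]
        · refine ⟨ε, hε, fun u hu => ?_⟩
          rw [abs_lt] at hu
          rw [hgs]
          rcases lt_trichotomy u t with hut | rfl | hut
          · rw [hgl u hut, hL u ⟨by linarith [hu.1], hut⟩]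
          · rw [hgs]
          · rw [hgr u hut, hR u ⟨hut, by linarith [hu.2]⟩, hqLR]
        · obtain ⟨d, hd, h⟩ := hloc t ht (by simp [htS, hts.ne'])
          refine ⟨min d (t - s), lt_min hd (by linarith), fun u hu => ?_⟩
          have h1 := lt_of_lt_of_le hu (min_le_left _ _)
          have h2 := lt_of_lt_of_le hu (min_le_right _ _)
          rw [hgr u (by linarith [neg_abs_le (u - t)]), hgr t hts, h u h1])
    have hsT : s ∉ T := fun h => hs (hTS h)
    have hfg : ∀ t, t ≠ s → f t = g t * (if s < t then q else 1) := by
      intro t hts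
      rcases lt_or_gt_of_ne hts with ht | ht
      · rw [hgl t ht, if_neg (not_lt.2 ht.le), mul_one]
      · rw [hgr t ht, if_pos ht]
        rcases hq with rfl | rfl <;> ring
    rcases hq with rfl | rfl
    · refine ⟨T, hTS.trans (Finset.subset_insert _ _), hT1, v, hv, fun t ht htS => ?_⟩
      rw [Finset.mem_insert, not_or] at htS
      rw [hfg t htS.1, h t ht htS.2]
      simp
    · refine ⟨insert s T, Finset.insert_subset_insert _ hTS, ?_, v, hv, fun t ht htS => ?_⟩
      · intro x hx
        rcases Finset.mem_insert.1 hx with rfl | hx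
        · exact hs1
        · exact hT1 x hx
      rw [Finset.mem_insert, not_or] at htS
      rw [hfg t htS.1, h t ht htS.2, Finset.prod_insert hsT]
      ring

/-- Periodic version of `sign_rep`: the switch at `0` is added when needed to make the number of
switches even, which is possible because a sign change across `0` makes `0` a jump point. -/
lemma sign_rep_per {a : ℝ} (ha : 0 < a) (S : Finset ℝ) (f : ℝ → ℝ) (hf : ∀ t, f t = a ∨ f t = -a)
    (hper : ∀ t, f (t + 1) = f t) (hS1 : (↑S : Set ℝ) ⊆ Set.Ico (0 : ℝ) 1)
    (hloc : ∀ t ∈ Set.Ico (0 : ℝ) 1, t ∉ S → IsLocallyConstantAt f t) :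
    ∃ T ⊆ S, Even T.card ∧ ∃ v, (v = a ∨ v = -a) ∧
      ∀ t ∈ Set.Ioo (0 : ℝ) 1, t ∉ S → f t = v * ∏ s ∈ T, (if s < t then (-1 : ℝ) else 1) := by
  obtain ⟨T, hTS, hT1, v, hv, h⟩ := sign_rep S f hf
    (fun t ht => hloc t ⟨ht.1.le, ht.2⟩)
  rcases Nat.even_or_odd T.card with he | ho
  · exact ⟨T, hTS, he, v, hv, h⟩
  have h0T : (0 : ℝ) ∉ T := fun h => lt_irrefl _ (hT1 0 h).1
  have h0S : (0 : ℝ) ∈ S := by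
    by_contra h0
    obtain ⟨ε, hε, h0l⟩ := hloc 0 (by simp) h0
    -- a point `t` so close to `0` that no point of `S` lies in `(0, t]` or in `[1 - t, 1)`
    have hev : ∀ᶠ t in 𝓝[>] (0 : ℝ), t < ε ∧ t < 1 ∧ ∀ s ∈ S, t < s ∧ s < 1 - t := by
      refine nhdsWithin_le_nhds ?_
      refine (gt_mem_nhds hε).and ((gt_mem_nhds one_pos).and ?_)
      rw [Filter.eventually_all_finset]
      intro s hs
      have hs1 := hS1 hs
      have : 0 < s := lt_of_le_of_ne hs1.1 (fun h => h0 (h ▸ hs))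
      filter_upwards [gt_mem_nhds this, gt_mem_nhds (sub_pos.2 hs1.2)] with t h1 h2
      exact ⟨h1, by linarith⟩
    obtain ⟨t, ⟨htε, ht1, hts⟩, ht0⟩ := (hev.and self_mem_nhdsWithin).exists
    have ht0 : 0 < t := ht0
    have e1 := h t ⟨ht0, ht1⟩ (fun h => lt_irrefl _ (hts t h).1)
    have e2 := h (1 - t) ⟨by linarith, by linarith⟩ (fun h => lt_irrefl _ (hts _ h).2)
    rw [Finset.prod_congr rfl (fun s hs => if_neg (not_lt.2 (hts s (hTS hs)).1.le))] at e1
    rw [Finset.prod_congr rfl (fun s hs => if_pos (hts s (hTS hs)).2)] at e2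
    rw [Finset.prod_const, ho.neg_one_pow] at e2
    have e3 : f (1 - t) = f 0 := by
      rw [show 1 - t = -t + 1 by ring, hper]
      exact h0l _ (by simpa [abs_of_pos ht0] using htε)
    have e4 : f t = f 0 := h0l _ (by simpa [abs_of_pos ht0] using htε)
    rw [e3, ← e4, e1] at e2
    simp at e2
    rcases hv with rfl | rfl <;> linarith
  refine ⟨insert 0 T, Finset.insert_subset h0S hTS, ?_, -v, ?_, fun t ht htS => ?_⟩
  · rw [Finset.card_insert_of_notMem h0T]
    exact ho.add_one
  · rcases hv with rfl | rfl <;> simp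
  · rw [h t ht htS, Finset.prod_insert h0T, if_pos ht.1]
    ring

/-! ### The recovery configuration -/

/-- The configuration `v ∏_{s ∈ T} (-ψ(i - ⌊ns⌋ - M) / a)`: it starts at `v`, and each `s ∈ T`
inserts a copy of the transition profile `ψ` on the sites `⌊ns⌋, …, ⌊ns⌋ + 2M`. Placing the copy
to the right of `s ∈ [0, 1)` keeps it inside `{0, …, n}` for large `n`, even when `s = 0`. -/
def recConfig (a v : ℝ) (T : Finset ℝ) (M : ℕ) (ψ : ℤ → ℝ) (n : ℕ) (i : ℕ) : ℝ :=
  v * ∏ s ∈ T, (-ψ ((i : ℤ) - ⌊(n : ℝ) * s⌋ - M) / a)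

section Construction

variable {a v : ℝ} {T : Finset ℝ} {M : ℕ} {ψ : ℤ → ℝ} {n : ℕ}

lemma factor_left (ha : 0 < a) (hM : 1 ≤ M)
    (hψ : ∀ i : ℤ, (M : ℤ) ≤ |i| → ψ i = (i.sign : ℝ) * a) {j : ℤ} (hj : j ≤ -M) :
    -ψ j / a = 1 := by
  have hj0 : j < 0 := by omega
  rw [hψ j (by rw [abs_of_neg hj0]; omega), Int.sign_eq_neg_one_of_neg hj0]
  field_simp
  norm_num

lemma factor_right (ha : 0 < a) (hM : 1 ≤ M)
    (hψ : ∀ i : ℤ, (M : ℤ) ≤ |i| → ψ i = (i.sign : ℝ) * a) {j : ℤ} (hj : (M : ℤ) ≤ j) :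
    -ψ j / a = -1 := by
  have hj0 : 0 < j := by omega
  rw [hψ j (by rw [abs_of_pos hj0]; omega), Int.sign_eq_one_of_pos hj0]
  field_simp
  norm_num

/-- Since the profiles are far apart, each bond is either inside a well or a copy, up to a global
sign, of a bond of `ψ`. -/
lemma recConfig_edge (ha : 0 < a) (hM : 1 ≤ M)
    (hψ : ∀ i : ℤ, (M : ℤ) ≤ |i| → ψ i = (i.sign : ℝ) * a) (hv : v = a ∨ v = -a)
    (hsep : ∀ s ∈ T, ∀ s' ∈ T, s < s' → (n : ℝ) * s + (2 * M + 1) ≤ n * s') (i : ℕ) :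
    (∃ ε : ℝ, (ε = 1 ∨ ε = -1) ∧ recConfig a v T M ψ n i = ε * a ∧
        recConfig a v T M ψ n (i + 1) = ε * a) ∨
    ∃ s ∈ T, ∃ ε : ℝ, (ε = 1 ∨ ε = -1) ∧
      recConfig a v T M ψ n i = ε * ψ ((i : ℤ) - ⌊(n : ℝ) * s⌋ - M) ∧
      recConfig a v T M ψ n (i + 1) = ε * ψ ((i : ℤ) - ⌊(n : ℝ) * s⌋ - M + 1) := by
  have hsepZ : ∀ s ∈ T, ∀ s' ∈ T, s < s' → ⌊(n : ℝ) * s⌋ + 2 * M < ⌊(n : ℝ) * s'⌋ := by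
    intro s hs s' hs' hlt
    have h1 := hsep s hs s' hs' hlt
    rw [Int.lt_iff_add_one_le, Int.le_floor]
    push_cast
    linarith [Int.floor_le ((n : ℝ) * s)]
  -- a site `j` of the profile is inactive if the bond `(j, j + 1)` lies in one well
  have hinact : ∀ j : ℤ, ¬ (-(M : ℤ) ≤ j ∧ j < M) →
      -ψ (j + 1) / a = -ψ j / a ∧ (-ψ j / a = 1 ∨ -ψ j / a = -1) := by
    intro j hj
    rcases lt_or_ge j (-(M : ℤ)) with h | h
    · rw [factor_left ha hM hψ h.le, factor_left ha hM hψ (show j + 1 ≤ -M by omega)]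
      simp
    · have h' : (M : ℤ) ≤ j := by by_contra h'; exact hj ⟨h, by omega⟩
      rw [factor_right ha hM hψ h', factor_right ha hM hψ (show (M : ℤ) ≤ j + 1 by omega)]
      simp
  have hcast : ∀ s : ℝ, ((i + 1 : ℕ) : ℤ) - ⌊(n : ℝ) * s⌋ - M =
      (i : ℤ) - ⌊(n : ℝ) * s⌋ - M + 1 := fun s => by push_cast; ring
  have hprod : ∀ T' : Finset ℝ, (∀ s ∈ T', -ψ ((i : ℤ) - ⌊(n : ℝ) * s⌋ - M) / a = 1 ∨
      -ψ ((i : ℤ) - ⌊(n : ℝ) * s⌋ - M) / a = -1) →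
      (∏ s ∈ T', (-ψ ((i : ℤ) - ⌊(n : ℝ) * s⌋ - M) / a) = 1 ∨
        ∏ s ∈ T', (-ψ ((i : ℤ) - ⌊(n : ℝ) * s⌋ - M) / a) = -1) := fun T' h =>
    Finset.prod_induction _ (fun x : ℝ => x = 1 ∨ x = -1)
      (by rintro x y (rfl | rfl) (rfl | rfl) <;> simp) (by simp) h
  unfold recConfig
  simp only [hcast]
  by_cases hact : ∃ s ∈ T, -(M : ℤ) ≤ (i : ℤ) - ⌊(n : ℝ) * s⌋ - M ∧
      (i : ℤ) - ⌊(n : ℝ) * s⌋ - M < M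
  · right
    obtain ⟨s, hs, h1, h2⟩ := hact
    have hoth : ∀ s' ∈ T.erase s, ¬ (-(M : ℤ) ≤ (i : ℤ) - ⌊(n : ℝ) * s'⌋ - M ∧
        (i : ℤ) - ⌊(n : ℝ) * s'⌋ - M < M) := by
      intro s' hs' h
      obtain ⟨hne, hs'T⟩ := Finset.mem_erase.1 hs'
      rcases lt_or_gt_of_ne hne with hlt | hlt
      · have := hsepZ s' hs'T s hs hlt
        omega
      · have := hsepZ s hs s' hs'T hlt
        omega
    have hP := hprod (T.erase s) (fun s' hs' => (hinact _ (hoth s' hs')).2)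
    have hP' := Finset.prod_congr (s₁ := T.erase s) rfl
      (fun s' hs' => (hinact _ (hoth s' hs')).1)
    rw [← Finset.mul_prod_erase T _ hs, ← Finset.mul_prod_erase T _ hs, hP']
    refine ⟨s, hs, -(v / a) * ∏ s ∈ T.erase s, (-ψ ((i : ℤ) - ⌊(n : ℝ) * s⌋ - M) / a),
      ?_, by ring, by ring⟩
    have hva : v / a = 1 ∨ v / a = -1 := by
      rcases hv with rfl | rfl
      · left; field_simp
      · right; field_simp
    rcases hva with h | h <;> rcases hP with h' | h' <;> rw [h, h'] <;> simp
  · left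
    push Not at hact
    have hoth : ∀ s ∈ T, ¬ (-(M : ℤ) ≤ (i : ℤ) - ⌊(n : ℝ) * s⌋ - M ∧
        (i : ℤ) - ⌊(n : ℝ) * s⌋ - M < M) := fun s hs h => by
      have := hact s hs h.1
      omega
    rw [Finset.prod_congr (s₁ := T) rfl (fun s' hs' => (hinact _ (hoth s' hs')).1)]
    have hP := hprod T (fun s' hs' => (hinact _ (hoth s' hs')).2)
    rcases hv with rfl | rfl <;> rcases hP with h' | h' <;> rw [h'] <;> simp

lemma recConfig_isConfig (ha : 0 < a) (ha2 : a ≤ π / 2) (hM : 1 ≤ M)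
    (hψ1 : ∀ i, ψ i ∈ Set.Icc (-(π / 2)) (π / 2))
    (hψ : ∀ i : ℤ, (M : ℤ) ≤ |i| → ψ i = (i.sign : ℝ) * a) (hv : v = a ∨ v = -a)
    (hsep : ∀ s ∈ T, ∀ s' ∈ T, s < s' → (n : ℝ) * s + (2 * M + 1) ≤ n * s')
    (hev : Even T.card) (hT0 : ∀ s ∈ T, 0 ≤ s) (hT1 : ∀ s ∈ T, (n : ℝ) * s + 2 * M ≤ n) :
    IsConfig n (recConfig a v T M ψ n) := by
  constructor
  · intro i _
    rcases recConfig_edge (n := n) ha hM hψ hv hsep i with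
      ⟨ε, hε, h, -⟩ | ⟨s, -, ε, hε, h, -⟩
    · rw [h]
      rcases hε with rfl | rfl <;> constructor <;> linarith
    · rw [h]
      have := hψ1 ((i : ℤ) - ⌊(n : ℝ) * s⌋ - M)
      rcases hε with rfl | rfl <;> constructor <;> linarith [this.1, this.2]
  · unfold recConfig
    have h0 : ∀ s ∈ T, -ψ (((0 : ℕ) : ℤ) - ⌊(n : ℝ) * s⌋ - M) / a = 1 := fun s hs =>
      factor_left ha hM hψ (by
        have : 0 ≤ ⌊(n : ℝ) * s⌋ := Int.floor_nonneg.2 (by have := hT0 s hs; positivity)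
        push_cast
        omega)
    have h1 : ∀ s ∈ T, -ψ ((n : ℤ) - ⌊(n : ℝ) * s⌋ - M) / a = -1 := fun s hs =>
      factor_right ha hM hψ (by
        have : (⌊(n : ℝ) * s⌋ : ℝ) + 2 * M ≤ n := by
          linarith [Int.floor_le ((n : ℝ) * s), hT1 s hs]
        have : ⌊(n : ℝ) * s⌋ + 2 * M ≤ n := by exact_mod_cast this
        omega)
    rw [Finset.prod_congr rfl h0, Finset.prod_congr rfl h1, Finset.prod_const, Finset.prod_const,
      hev.neg_one_pow, one_pow]

lemma recConfig_eq (ha : 0 < a) (hM : 1 ≤ M)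
    (hψ : ∀ i : ℤ, (M : ℤ) ≤ |i| → ψ i = (i.sign : ℝ) * a) {t : ℝ} (ht : 0 ≤ t)
    (hT : ∀ s ∈ T, t < s ∨ (n : ℝ) * s + (2 * M + 1) ≤ n * t) (hn : 0 < n) :
    recConfig a v T M ψ n ⌊(n : ℝ) * t⌋₊ = v * ∏ s ∈ T, (if s < t then (-1 : ℝ) else 1) := by
  unfold recConfig
  congr 1
  refine Finset.prod_congr rfl fun s hs => ?_
  have hn' : (0 : ℝ) < n := by exact_mod_cast hn
  rw [Int.natCast_floor_eq_floor (by positivity)]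
  rcases hT s hs with h | h
  · rw [if_neg (not_lt.2 h.le)]
    refine factor_left ha hM hψ ?_
    have : ⌊(n : ℝ) * t⌋ ≤ ⌊(n : ℝ) * s⌋ := Int.floor_le_floor (by gcongr)
    omega
  · have hst : s < t := by
      have : (n : ℝ) * s < n * t := by
        have : (0 : ℝ) ≤ M := by positivity
        linarith
      exact lt_of_mul_lt_mul_left this hn'.le
    rw [if_pos hst]
    refine factor_right ha hM hψ ?_
    have : ⌊(n : ℝ) * s⌋ + 2 * M ≤ ⌊(n : ℝ) * t⌋ := by
      rw [Int.le_floor]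
      push_cast
      linarith [Int.floor_le ((n : ℝ) * s)]
    omega

end Construction

lemma sum_range_le_tsum (f : ℤ → ℝ≥0∞) (n : ℕ) (c : ℤ) :
    ∑ i ∈ Finset.range n, f ((i : ℤ) + c) ≤ ∑' i, f i := by
  have hinj : Function.Injective (fun i : ℕ => (i : ℤ) + c) := fun x y h => by
    simpa using h
  exact (ENNReal.sum_le_tsum (f := fun i : ℕ => f ((i : ℤ) + c)) _).trans
    (ENNReal.tsum_comp_le_tsum_of_injective hinj f)

/-- Each bond of the configuration costs at most the sum over `s ∈ T` of the corresponding bonds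
of the translated profiles; summing over the bonds first gives one `creaseSum` for each `s`. -/
lemma recConfig_energy {α v : ℝ} {T : Finset ℝ} {M : ℕ} {ψ : ℤ → ℝ} {n : ℕ}
    (hα : α ∈ Set.Ico (0 : ℝ) 4) (hM : 1 ≤ M)
    (hψ : ∀ i : ℤ, (M : ℤ) ≤ |i| → ψ i = (i.sign : ℝ) * thetaMin α)
    (hv : v = thetaMin α ∨ v = -thetaMin α)
    (hsep : ∀ s ∈ T, ∀ s' ∈ T, s < s' → (n : ℝ) * s + (2 * M + 1) ≤ n * s') :
    ENNReal.ofReal (En α n (recConfig (thetaMin α) v T M ψ n)) ≤ T.card * creaseSum α ψ := by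
  set θ := recConfig (thetaMin α) v T M ψ n with hθ
  have hE : En α n θ = ∑ i ∈ Finset.range n, bondEnergy α (θ i) (θ (i + 1)) := rfl
  rw [hE, ENNReal.ofReal_sum_of_nonneg (fun _ _ => bondEnergy_nonneg _ _ _)]
  have hsign : ∀ ε x y : ℝ, (ε = 1 ∨ ε = -1) →
      bondEnergy α (ε * x) (ε * y) = bondEnergy α x y := by
    rintro ε x y (rfl | rfl)
    · simp
    · simpa using bondEnergy_neg α x y
  calc ∑ i ∈ Finset.range n, ENNReal.ofReal (bondEnergy α (θ i) (θ (i + 1)))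
      ≤ ∑ i ∈ Finset.range n, ∑ s ∈ T,
          ENNReal.ofReal (creaseSummand α ψ ((i : ℤ) + (-⌊(n : ℝ) * s⌋ - M))) := by
        refine Finset.sum_le_sum fun i _ => ?_
        rcases recConfig_edge (n := n) (thetaMin_pos hα) hM hψ hv hsep i with
          ⟨ε, hε, h1, h2⟩ | ⟨s, hs, ε, hε, h1, h2⟩
        · rw [hθ, h1, h2, hsign _ _ _ hε, bondEnergy_thetaMin hα]
          simp
        · rw [hθ, h1, h2, hsign _ _ _ hε]
          refine le_trans (le_of_eq ?_) (Finset.single_le_sum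
            (f := fun s => ENNReal.ofReal (creaseSummand α ψ ((i : ℤ) + (-⌊(n : ℝ) * s⌋ - M))))
            (fun _ _ => zero_le) hs)
          rw [show (i : ℤ) - ⌊(n : ℝ) * s⌋ - M = (i : ℤ) + (-⌊(n : ℝ) * s⌋ - M) by ring]
          rfl
    _ = ∑ s ∈ T, ∑ i ∈ Finset.range n,
          ENNReal.ofReal (creaseSummand α ψ ((i : ℤ) + (-⌊(n : ℝ) * s⌋ - M))) :=
        Finset.sum_comm
    _ ≤ ∑ s ∈ T, creaseSum α ψ := Finset.sum_le_sum fun s _ =>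
        sum_range_le_tsum (fun i => ENNReal.ofReal (creaseSummand α ψ i)) n _
    _ = T.card * creaseSum α ψ := by rw [Finset.sum_const, nsmul_eq_mul]

/-! ### Almost optimal profiles -/

lemma exists_profile {α : ℝ} (hα : α ∈ Set.Ico (0 : ℝ) 4) {ε : ℝ≥0∞} (hε : ε ≠ 0) :
    ∃ (M : ℕ) (ψ : ℤ → ℝ), 1 ≤ M ∧ (∀ i, ψ i ∈ Set.Icc (-(π / 2)) (π / 2)) ∧
      (∀ i : ℤ, (M : ℤ) ≤ |i| → ψ i = (i.sign : ℝ) * thetaMin α) ∧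
      creaseSum α ψ ≤ crease α + ε := by
  have hp := thetaMin_pos hα
  have hle := thetaMin_le hα
  by_cases hC : crease α = ⊤
  · refine ⟨1, fun i => (i.sign : ℝ) * thetaMin α, le_rfl, fun i => ?_, fun _ _ => rfl,
      by simp [hC]⟩
    beta_reduce
    rcases lt_trichotomy i 0 with h | rfl | h
    · rw [Int.sign_eq_neg_one_of_neg h]
      push_cast
      constructor <;> linarith
    · simp only [Int.sign_zero, Int.cast_zero, zero_mul]
      constructor <;> linarith
    · rw [Int.sign_eq_one_of_pos h]
      push_cast
      constructor <;> linarith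
  · obtain ⟨c, ⟨M, ψ, h1, h2, rfl⟩, hc⟩ := sInf_lt_iff.1 (ENNReal.lt_add_right hC hε)
    exact ⟨max M 1, ψ, le_max_right _ _, h1, fun i hi => h2 i (le_trans (by simp) hi), hc.le⟩

/-! ### Convergence away from the jumps -/

/-- The set of points whose fractional part lies within `δ` to the right of `0` or of a point
of `S`. -/
def badSet (S : Finset ℝ) (δ : ℝ) : Set ℝ :=
  Int.fract ⁻¹' ⋃ s ∈ insert 0 S, Set.Icc s (s + δ)

lemma measurableSet_badSet (S : Finset ℝ) (δ : ℝ) : MeasurableSet (badSet S δ) :=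
  measurable_fract (Finset.measurableSet_biUnion _ fun _ _ => measurableSet_Icc)

lemma notMem_badSet {S : Finset ℝ} {δ t : ℝ} :
    t ∉ badSet S δ ↔ ∀ s ∈ insert 0 S, Int.fract t < s ∨ s + δ < Int.fract t := by
  simp only [badSet, Set.mem_preimage, Set.mem_iUnion, Set.mem_Icc, not_exists, not_and_or,
    not_le]

lemma tendsto_badSet_integral (S : Finset ℝ) {δ : ℕ → ℝ} (hδ : Tendsto δ atTop (𝓝 0))
    {K : Set ℝ} (hK : IsCompact K) :
    Tendsto (fun n => ∫ t in K, (badSet S (δ n)).indicator (fun _ => π) t) atTop (𝓝 0) := by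
  have hKfin : volume K ≠ ⊤ := hK.measure_lt_top.ne
  have hcount : {t : ℝ | Int.fract t ∈ insert 0 S}.Countable := by
    refine ((Set.countable_range (fun p : ℤ × {x // x ∈ insert 0 S} =>
      (p.1 : ℝ) + p.2.1))).mono fun t ht => ?_
    exact ⟨(⌊t⌋, ⟨Int.fract t, ht⟩), Int.floor_add_fract t⟩
  have hlim : ∀ᵐ t ∂(volume.restrict K),
      Tendsto (fun n => (badSet S (δ n)).indicator (fun _ => π) t) atTop (𝓝 0) := by
    refine ae_restrict_of_ae ?_
    filter_upwards [hcount.ae_notMem volume] with t ht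
    refine tendsto_const_nhds.congr' ?_
    have hall : ∀ᶠ n in atTop, ∀ s ∈ insert 0 S, Int.fract t < s ∨ s + δ n < Int.fract t := by
      rw [Filter.eventually_all_finset]
      intro s hs
      rcases lt_or_gt_of_ne (fun h : Int.fract t = s => ht (by simpa [h] using hs)) with h | h
      · exact Eventually.of_forall fun n => Or.inl h
      · filter_upwards [hδ.eventually (gt_mem_nhds (sub_pos.2 h))] with n hn
        right; linarith
    filter_upwards [hall] with n hn
    rw [Set.indicator_of_notMem (notMem_badSet.2 hn)]
  have := tendsto_integral_of_dominated_convergence (μ := volume.restrict K) (fun _ => π)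
    (fun n => (measurable_const.indicator (measurableSet_badSet S (δ n))).aestronglyMeasurable)
    (integrableOn_const hKfin) (fun n => Eventually.of_forall fun t => by
      by_cases h : t ∈ badSet S (δ n) <;> simp [h, abs_of_pos Real.pi_pos, Real.pi_pos.le]) hlim
  simpa using this

/-! ### The recovery sequence -/

/-- STATEMENT 12 (recovery sequence for fixed `α ∈ [0,4)`): if `θL` is a `1`-periodic
piecewise constant function with values in `{±θ_α}` and exactly `N` jump points in
`[0,1)`, then there is a sequence of configurations whose periodic interpolations
converge to `θL` in `L¹_loc(ℝ)` with `limsup E_n^α(θ_n) ≤ C_α · N`. -/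
theorem gamma_limsup_fixed_alpha (α : ℝ) (hα : α ∈ Set.Ico (0 : ℝ) 4) (N : ℕ)
    (θL : ℝ → ℝ) (hper : ∀ t, θL (t + 1) = θL t)
    (hval : ∀ t, θL t ∈ ({thetaMin α, -thetaMin α} : Set ℝ))
    (hjump : ∃ S : Finset ℝ, ↑S ⊆ Set.Ico (0 : ℝ) 1 ∧ S.card = N ∧
      ∀ s ∈ Set.Ico (0 : ℝ) 1, (¬ IsLocallyConstantAt θL s ↔ s ∈ S)) :
    ∃ θseq : (n : ℕ) → ℕ → ℝ, (∀ n, IsConfig n (θseq n)) ∧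
      (∀ K : Set ℝ, IsCompact K →
        Filter.Tendsto (fun n => ∫ t in K, |interpPer n (θseq n) t - θL t|)
          Filter.atTop (𝓝 0)) ∧
      Filter.limsup (fun n => ENNReal.ofReal (En α n (θseq n))) Filter.atTop ≤
        crease α * N := by
  classical
  obtain ⟨S, hS1, hcard, hS⟩ := hjump
  have ha := thetaMin_pos hα
  have ha2 := thetaMin_le hα
  have hper' : ∀ t, θL (Int.fract t) = θL t := fun t => by
    have : Function.Periodic θL 1 := hper
    have := this.sub_int_mul_eq (x := t) ⌊t⌋
    rwa [mul_one] at this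
  obtain ⟨T, hTS, hTev, v, hv, hrep⟩ := sign_rep_per ha S θL hval hper hS1
    (fun t ht htS => by_contra fun h => htS ((hS t ht).1 h))
  have hT1 : ∀ s ∈ T, s ∈ Set.Ico (0 : ℝ) 1 := fun s hs => hS1 (hTS hs)
  have hTN : (T.card : ℝ≥0∞) ≤ N := by
    rw [← hcard]
    exact_mod_cast Finset.card_le_card hTS
  set δ : ℕ → ℝ := fun k => 1 / ((k : ℝ) + 1) with hδ
  have hδ0 : Tendsto δ atTop (𝓝 0) := tendsto_one_div_add_atTop_nhds_zero_nat
  have hδpos : ∀ k, 0 < δ k := fun k => by positivity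
  -- `Q k n`: some configuration on `n` sites is a recovery configuration up to error `1 / (k + 1)`
  let Q : ℕ → ℕ → Prop := fun k n => ∃ θ : ℕ → ℝ, IsConfig n θ ∧
    ENNReal.ofReal (En α n θ) ≤ (crease α + ENNReal.ofReal (δ k)) * N ∧
    ∀ t, t ∉ badSet S (δ k) → interpPer n θ t = θL t
  have hQ : ∀ k, ∀ᶠ n in atTop, Q k n := by
    intro k
    obtain ⟨M, ψ, hM, hψ1, hψ, hen⟩ := exists_profile hα
      (ε := ENNReal.ofReal (δ k)) (by simpa using hδpos k)
    have hbig : ∀ c d : ℝ, 0 < c → ∀ᶠ n : ℕ in atTop, d ≤ n * c := fun c d hc =>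
      (tendsto_natCast_atTop_atTop.atTop_mul_const hc).eventually_ge_atTop d
    have hsep : ∀ᶠ n : ℕ in atTop,
        ∀ s ∈ T, ∀ s' ∈ T, s < s' → (n : ℝ) * s + (2 * M + 1) ≤ n * s' := by
      simp only [Filter.eventually_all_finset]
      intro s _ s' _
      by_cases h : s < s'
      · filter_upwards [hbig (s' - s) (2 * M + 1) (sub_pos.2 h)] with n hn _
        linarith
      · exact Eventually.of_forall fun n h' => absurd h' h
    have hend : ∀ᶠ n : ℕ in atTop, ∀ s ∈ T, (n : ℝ) * s + 2 * M ≤ n := by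
      simp only [Filter.eventually_all_finset]
      intro s hs
      filter_upwards [hbig (1 - s) (2 * M) (sub_pos.2 (hT1 s hs).2)] with n hn
      linarith
    filter_upwards [hsep, hend, hbig (δ k) (2 * M + 1) (hδpos k), eventually_gt_atTop 0]
      with n h1 h2 h3 hn
    refine ⟨recConfig (thetaMin α) v T M ψ n,
      recConfig_isConfig ha ha2 hM hψ1 hψ hv h1 hTev (fun s hs => (hT1 s hs).1) h2, ?_, ?_⟩
    · refine (recConfig_energy hα hM hψ hv h1).trans ?_
      rw [mul_comm]
      exact mul_le_mul' hen hTN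
    · intro t ht
      rw [notMem_badSet] at ht
      have hpos : 0 < Int.fract t := by
        rcases ht 0 (by simp) with h | h
        · exact absurd h (not_lt.2 (Int.fract_nonneg t))
        · linarith [hδpos k]
      have htS : Int.fract t ∉ S := fun h => by
        rcases ht _ (Finset.mem_insert_of_mem h) with h | h
        · exact lt_irrefl _ h
        · linarith [hδpos k]
      rw [← hper' t, hrep _ ⟨hpos, Int.fract_lt_one t⟩ htS]
      refine recConfig_eq ha hM hψ hpos.le (fun s hs => ?_) hn
      refine (ht s (Finset.mem_insert_of_mem (hTS hs))).imp_right fun h => ?_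
      have : (n : ℝ) * (s + δ k) ≤ n * Int.fract t := by gcongr
      linarith
  -- diagonal choice: for each `n` use the best accuracy `k ≤ n` available on `n` sites
  let κ : ℕ → ℕ := fun n => Nat.findGreatest (fun k => Q k n) n
  have hκ : Tendsto κ atTop atTop := by
    refine tendsto_atTop.2 fun k => ?_
    filter_upwards [hQ k, eventually_ge_atTop k] with n h1 h2
    exact Nat.le_findGreatest h2 h1
  have hQκ : ∀ᶠ n in atTop, Q (κ n) n := by
    filter_upwards [hQ 0] with n h1
    exact Nat.findGreatest_spec (P := fun k => Q k n) (Nat.zero_le n) h1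
  have hex : ∀ n, ∃ θ : ℕ → ℝ, IsConfig n θ ∧ (Q (κ n) n →
      ENNReal.ofReal (En α n θ) ≤ (crease α + ENNReal.ofReal (δ (κ n))) * N ∧
      ∀ t, t ∉ badSet S (δ (κ n)) → interpPer n θ t = θL t) := by
    intro n
    by_cases h : Q (κ n) n
    · obtain ⟨θ, h1, h2⟩ := h
      exact ⟨θ, h1, fun _ => h2⟩
    · exact ⟨fun _ => 0, ⟨fun _ _ => ⟨by linarith [Real.pi_pos], by positivity⟩, rfl⟩,
        fun h' => absurd h' h⟩
  choose θseq hconf hprop using hex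
  refine ⟨θseq, hconf, fun K hK => ?_, ?_⟩
  · refine tendsto_of_tendsto_of_tendsto_of_le_of_le' tendsto_const_nhds
      (tendsto_badSet_integral S (hδ0.comp hκ) hK)
      (Eventually.of_forall fun n => integral_nonneg fun t => abs_nonneg _) ?_
    filter_upwards [hQκ, eventually_gt_atTop 0] with n hn hn0
    have hKfin : volume K ≠ ⊤ := hK.measure_lt_top.ne
    -- the upper bound is integrable, so measurability of `θL` is not required
    refine integral_mono_of_nonneg (Eventually.of_forall fun t => abs_nonneg _)
      (Integrable.indicator (integrableOn_const hKfin) (measurableSet_badSet S _))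
      (Eventually.of_forall fun t => ?_)
    by_cases ht : t ∈ badSet S (δ (κ n))
    · have hi : ⌊(n : ℝ) * Int.fract t⌋₊ ≤ n := Nat.floor_le_of_le (by
        have : (0 : ℝ) ≤ n := by positivity
        nlinarith [Int.fract_lt_one t])
      have h1 : interpPer n (θseq n) t ∈ Set.Icc (-(π / 2)) (π / 2) := (hconf n).1 _ hi
      simp only [Function.comp, Set.indicator_of_mem ht]
      rw [abs_le]
      rcases hval t with h | h <;> rw [h] <;> constructor <;> linarith [h1.1, h1.2]
    · simp only [Function.comp, Set.indicator_of_notMem ht]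
      rw [(hprop n hn).2 t ht, sub_self, abs_zero]
  · have hlim : Tendsto (fun n => (crease α + ENNReal.ofReal (δ (κ n))) * N) atTop
        (𝓝 (crease α * N)) := by
      refine ENNReal.Tendsto.mul_const ?_ (Or.inr (ENNReal.natCast_ne_top N))
      have : Tendsto (fun n => ENNReal.ofReal (δ (κ n))) atTop (𝓝 (ENNReal.ofReal 0)) :=
        (ENNReal.continuous_ofReal.tendsto 0).comp (hδ0.comp hκ)
      simpa using tendsto_const_nhds.add this
    rw [← hlim.limsup_eq]
    refine limsup_le_limsup ?_
    filter_upwards [hQκ] with n hn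
    exact (hprop n hn).1
end
end

section
/- (Asymptotics of the crease energy at the transition point.) The crease energy satisfies lim_{α→4⁻} 3 C_α / (√2 (4 − α)^{3/2}) = 1; equivalently, C_α ∼ (√2/3)(4 − α)^{3/2} as α → 4⁻. -/
/-!
With `c = α / 4 = cos ε`, `ε = θ_α`, a summand equals
`2 (cos s - c) ^ 2 + 4 c cos s (1 - cos D)` for the mean `s` and the half-difference `D` of
neighbouring angles. This is a discrete Modica–Mortola energy, close to
`(ε ^ 2 - θ ^ 2) ^ 2 / 2 + (θ') ^ 2 / 2`, whose optimal transition cost is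
`∫ (ε ^ 2 - t ^ 2) dt = (4 / 3) ε ^ 3` over `[-ε, ε]`.

Lower bound (`le_crease`). A configuration with a summand above `2 η ^ 2` is too expensive as
`ε → 0`. Otherwise every summand dominates, up to a factor `1 + 8 η`, the increment of
`2 (sin t - c t)` (`calib_sub_le`), and these increments telescope to
`4 (sin ε - ε cos ε) ≈ (4 / 3) ε ^ 3`.

Upper bound (`crease_le`). The competitor is the odd extension of the forward Euler scheme for
`a' = ε ^ 2 - a ^ 2`, set to `ε` once it is within `ε ^ 2` of `ε`. On the right half each
summand before the final jump is at most `(ε ^ 2 - a ^ 2) (b - a)`, and the jump costs `O(ε ^ 4)`,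
so the energy is at most a Riemann sum of the integral above plus `O(ε ^ 4)`.

Finally `√2 (4 - α) ^ (3 / 2) = 32 sin (ε / 2) ^ 3 ∼ 4 ε ^ 3`.
-/

open Real MeasureTheory Filter Topology
open scoped ENNReal

noncomputable section

/-! ### The pair interaction -/

/-- The pair interaction between neighbouring angles `a`, `b`, with `c = α / 4 = cos θ_α`. -/
def pairEnergy (c a b : ℝ) : ℝ :=
  Real.cos (a + b) - 2 * c * (Real.cos a + Real.cos b) + 2 * c ^ 2 + 1

lemma creaseSummand_eq (α : ℝ) (θ : ℤ → ℝ) (i : ℤ) :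
    creaseSummand α θ i = pairEnergy (α / 4) (θ i) (θ (i + 1)) := by
  unfold creaseSummand pairEnergy
  ring

/-- The splitting of the interaction into a double-well term in the mean angle and an elastic term
in the half-difference. -/
lemma pairEnergy_eq (c a b : ℝ) :
    pairEnergy c a b = 2 * (Real.cos ((a + b) / 2) - c) ^ 2
      + 4 * c * Real.cos ((a + b) / 2) * (1 - Real.cos ((b - a) / 2)) := by
  have h1 : Real.cos (a + b) = 2 * Real.cos ((a + b) / 2) ^ 2 - 1 := by
    rw [← Real.cos_two_mul]; ring_nf
  have h2 : Real.cos a + Real.cos b = 2 * Real.cos ((a + b) / 2) * Real.cos ((b - a) / 2) := by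
    rw [Real.cos_add_cos, ← Real.cos_neg ((b - a) / 2)]; ring_nf
  unfold pairEnergy
  rw [h1, h2]; ring

lemma pairEnergy_neg_swap (c a b : ℝ) : pairEnergy c (-b) (-a) = pairEnergy c a b := by
  unfold pairEnergy
  rw [show -b + -a = -(a + b) by ring]
  simp only [Real.cos_neg]
  ring

lemma pairEnergy_nonneg {c a b : ℝ} (hc : 0 ≤ c) (ha : a ∈ Set.Icc (-(π / 2)) (π / 2))
    (hb : b ∈ Set.Icc (-(π / 2)) (π / 2)) : 0 ≤ pairEnergy c a b := by
  rw [pairEnergy_eq]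
  have h1 : 0 ≤ Real.cos ((a + b) / 2) :=
    Real.cos_nonneg_of_mem_Icc ⟨by linarith [ha.1, hb.1], by linarith [ha.2, hb.2]⟩
  have h2 : 0 ≤ 1 - Real.cos ((b - a) / 2) := by linarith [Real.cos_le_one ((b - a) / 2)]
  positivity

/-! ### Calibration and the lower bound -/

/-- The potential whose increments bound the interaction from below: an antiderivative of
`2 (cos t - c)`. -/
def calib (c t : ℝ) : ℝ := 2 * (Real.sin t - c * t)

lemma sq_le_five_mul_one_sub_cos {x : ℝ} (hx : |x| ≤ π / 2) : x ^ 2 ≤ 5 * (1 - Real.cos x) := by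
  have h := Real.cos_le_one_sub_mul_cos_sq (x := x) (by linarith [Real.pi_pos])
  have h2 : 1 / 5 ≤ 2 / π ^ 2 := by
    rw [div_le_div_iff₀ (by norm_num) (by positivity)]
    nlinarith [Real.pi_pos, Real.pi_lt_d2]
  nlinarith [mul_le_mul_of_nonneg_right h2 (sq_nonneg x)]

/-- The algebra behind calibration: `2 X ^ 2 + 2 Y ^ 2 ≥ 4 X Y` with `X = C - c` and
`Y = (1 - 2 η) S`, where `C`, `D`, `S`, `u` stand for `cos ((a + b) / 2)`, `(b - a) / 2`, `sin D`,
`1 - cos D`. The cubic error `S - D` is absorbed by the elastic term. -/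
lemma calib_algebra {η c C D S u E : ℝ} (hη : 0 < η) (hη' : η ≤ 1 / 8) (hc : 1 - η ≤ c)
    (hc1 : c ≤ 1) (hC0 : 0 ≤ C) (hu0 : 0 ≤ u) (hnn : 0 ≤ E)
    (hEq : E = 2 * (C - c) ^ 2 + 4 * c * C * u) (hE : E ≤ 2 * η ^ 2)
    (hu : S ^ 2 ≤ 2 * u) (hD2 : D ^ 2 ≤ 5 * u) (hsD : S - D ≤ |D| ^ 3 / 6) :
    4 * ((C - c) * S + c * (S - D)) ≤ (1 + 8 * η) * E := by
  have hc0 : 0 ≤ c := by linarith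
  have hcu : 0 ≤ 4 * c * C * u := by positivity
  have hX : |C - c| ≤ η := abs_le_of_sq_le_sq (by linarith) hη.le
  have hC : 1 - 2 * η ≤ C := by linarith [(abs_le.1 hX).1]
  have hcC : (1 - 2 * η) ^ 2 ≤ c * C := by
    rw [sq]
    exact mul_le_mul (by linarith) hC (by linarith) hc0
  have hk : 4 * ((1 - 2 * η) ^ 2 * u) ≤ 4 * c * C * u := by
    linarith [mul_le_mul_of_nonneg_right hcC hu0]
  have hη2 : (9 : ℝ) / 16 ≤ (1 - 2 * η) ^ 2 := by nlinarith
  have hu2 : 9 / 4 * u ≤ E := by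
    linarith [mul_le_mul_of_nonneg_right hη2 hu0, sq_nonneg (C - c)]
  have hXS : (1 - 2 * η) * (4 * ((C - c) * S)) ≤ E := by
    linarith [sq_nonneg ((C - c) - (1 - 2 * η) * S),
      mul_le_mul_of_nonneg_left hu (sq_nonneg (1 - 2 * η))]
  have hXS' : 4 * ((C - c) * S) ≤ (1 + 3 * η) * E := by
    have h0 : 0 < 1 - 2 * η := by linarith
    have : (1 - 2 * η) * (4 * ((C - c) * S)) ≤ (1 - 2 * η) * ((1 + 3 * η) * E) := by
      have h1 : 1 ≤ (1 - 2 * η) * (1 + 3 * η) := by nlinarith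
      linarith [mul_le_mul_of_nonneg_right h1 hnn]
    exact le_of_mul_le_mul_left this h0
  have hDabs : |D| ≤ 3 * η := by
    apply abs_le_of_sq_le_sq _ (by linarith)
    linarith [sq_nonneg η]
  have hcube : |D| ^ 3 ≤ 3 * η * (5 * u) := by
    calc |D| ^ 3 = |D| * D ^ 2 := by rw [← sq_abs D]; ring
      _ ≤ 3 * η * (5 * u) := by gcongr
  have hcub2 : c * (S - D) ≤ |D| ^ 3 / 6 := by
    have h0 : 0 ≤ |D| ^ 3 / 6 := by positivity
    linarith [mul_le_mul_of_nonneg_left hsD hc0, mul_le_mul_of_nonneg_right hc1 h0]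
  linarith [mul_le_mul_of_nonneg_left hu2 hη.le, mul_nonneg hη.le hnn]

/-- Pairs of low energy are calibrated, up to a factor close to `1`. -/
lemma calib_sub_le {η c a b : ℝ} (hη : 0 < η) (hη' : η ≤ 1 / 8) (hc : 1 - η ≤ c) (hc1 : c ≤ 1)
    (ha : a ∈ Set.Icc (-(π / 2)) (π / 2)) (hb : b ∈ Set.Icc (-(π / 2)) (π / 2))
    (hE : pairEnergy c a b ≤ 2 * η ^ 2) :
    calib c b - calib c a ≤ (1 + 8 * η) * pairEnergy c a b := by
  have hFab : calib c b - calib c a = 4 * ((Real.cos ((a + b) / 2) - c) * Real.sin ((b - a) / 2)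
      + c * (Real.sin ((b - a) / 2) - (b - a) / 2)) := by
    have h : Real.sin b - Real.sin a = 2 * Real.sin ((b - a) / 2) * Real.cos ((b + a) / 2) :=
      Real.sin_sub_sin b a
    rw [add_comm b a] at h
    unfold calib
    linear_combination 2 * h
  have hD : |(b - a) / 2| ≤ π / 2 :=
    abs_le.2 ⟨by linarith [ha.2, hb.1], by linarith [ha.1, hb.2]⟩
  have hu0 : 0 ≤ 1 - Real.cos ((b - a) / 2) := by linarith [Real.cos_le_one ((b - a) / 2)]
  rw [hFab]
  refine calib_algebra hη hη' hc hc1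
    (Real.cos_nonneg_of_mem_Icc ⟨by linarith [ha.1, hb.1], by linarith [ha.2, hb.2]⟩) hu0
    (pairEnergy_nonneg (by linarith) ha hb) (pairEnergy_eq c a b) hE ?_
    (sq_le_five_mul_one_sub_cos hD)
    (by linarith [(abs_le.1 (Real.abs_sub_sin_le ((b - a) / 2))).1])
  nlinarith [Real.sin_sq_add_cos_sq ((b - a) / 2), sq_nonneg (1 - Real.cos ((b - a) / 2))]

/-- Lower bound: either one pair already costs `2 η ^ 2`, or every pair is calibrated and the sum
telescopes. -/
lemma le_crease {η α : ℝ} (hη : 0 < η) (hη' : η ≤ 1 / 8) (hα : 1 - η ≤ α / 4) (hα1 : α / 4 ≤ 1) :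
    ENNReal.ofReal (min (2 * η ^ 2)
      (4 * (Real.sin (thetaMin α) - α / 4 * thetaMin α) / (1 + 8 * η))) ≤ crease α := by
  refine le_sInf ?_
  rintro _ ⟨N, θ, hθ, hN, rfl⟩
  have hnn : ∀ i, 0 ≤ creaseSummand α θ i := fun i => by
    rw [creaseSummand_eq]
    exact pairEnergy_nonneg (by linarith) (hθ i) (hθ (i + 1))
  by_cases hbig : ∃ i, 2 * η ^ 2 < creaseSummand α θ i
  · obtain ⟨i, hi⟩ := hbig
    calc _ ≤ ENNReal.ofReal (creaseSummand α θ i) :=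
          ENNReal.ofReal_le_ofReal ((min_le_left _ _).trans hi.le)
      _ ≤ _ := ENNReal.le_tsum i
  push Not at hbig
  -- `N + 1` in place of `N` avoids the value `sign 0 = 0` at the endpoints.
  let e : ℕ → ℤ := fun n => (n : ℤ) - (N + 1)
  have he : Function.Injective e := fun m n h => by simpa [e] using h
  have hstep : ∀ n : ℕ, calib (α / 4) (θ (e (n + 1))) - calib (α / 4) (θ (e n))
      ≤ (1 + 8 * η) * creaseSummand α θ (e n) := fun n => by
    have h := hbig (e n)
    rw [creaseSummand_eq] at h ⊢
    have : e (n + 1) = e n + 1 := by simp only [e]; push_cast; ring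
    rw [this]
    exact calib_sub_le hη hη' hα hα1 (hθ _) (hθ _) h
  have hsum := Finset.sum_le_sum (s := Finset.range (2 * (N + 1))) (fun n _ => hstep n)
  rw [Finset.sum_range_sub (fun n => calib (α / 4) (θ (e n))), ← Finset.mul_sum] at hsum
  have hr : θ (e (2 * (N + 1))) = thetaMin α := by
    have h1 : e (2 * (N + 1)) = (N : ℤ) + 1 := by simp only [e]; push_cast; ring
    rw [h1, hN _ (by rw [abs_of_nonneg] <;> omega), Int.sign_eq_one_of_pos (by omega)]
    simp
  have hl : θ (e 0) = -thetaMin α := by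
    have h1 : e 0 = -((N : ℤ) + 1) := by simp [e]
    rw [h1, hN _ (by rw [abs_neg, abs_of_nonneg] <;> omega), Int.sign_eq_neg_one_of_neg (by omega)]
    simp
  rw [hr, hl] at hsum
  calc _ ≤ ENNReal.ofReal (∑ n ∈ Finset.range (2 * (N + 1)), creaseSummand α θ (e n)) := by
        apply ENNReal.ofReal_le_ofReal
        refine (min_le_right _ _).trans ?_
        rw [div_le_iff₀ (by linarith)]
        unfold calib at hsum
        rw [Real.sin_neg] at hsum
        linarith
    _ = ∑ i ∈ (Finset.range (2 * (N + 1))).image e, ENNReal.ofReal (creaseSummand α θ i) := by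
        rw [ENNReal.ofReal_sum_of_nonneg (fun i _ => hnn _), Finset.sum_image he.injOn]
    _ ≤ creaseSum α θ := ENNReal.sum_le_tsum _

/-! ### The Euler competitor and the upper bound -/

/-- Forward Euler scheme for the gradient flow `a' = ε ^ 2 - a ^ 2` of the optimal profile
`ε tanh (ε t)`. -/
def profile (ε : ℝ) : ℕ → ℝ
  | 0 => 0
  | n + 1 => profile ε n + (ε ^ 2 - profile ε n ^ 2)

lemma profile_bounds {ε : ℝ} (h0 : 0 ≤ ε) (h1 : ε ≤ 1 / 2) (n : ℕ) :
    0 ≤ profile ε n ∧ profile ε n ≤ ε ∧ ε - profile ε n ≤ ε * (1 - ε) ^ n := by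
  induction n with
  | zero => simp [profile, h0]
  | succ n ih =>
    obtain ⟨ha, hb, hc⟩ := ih
    have hd : 0 ≤ ε - profile ε n := by linarith
    simp only [profile, pow_succ]
    generalize profile ε n = a at *
    refine ⟨by nlinarith, by nlinarith, ?_⟩
    nlinarith [mul_le_mul_of_nonneg_right hc (show 0 ≤ 1 - ε by linarith), mul_nonneg hd ha]

lemma cos_sub_cos_le {a b : ℝ} (ha : 0 ≤ a) (hab : a ≤ b) (hb : b ≤ 1) :
    Real.cos a - Real.cos b ≤ (b ^ 2 - a ^ 2) / 2 := by
  have h : Real.cos a - Real.cos b = 2 * (Real.sin ((a + b) / 2) * Real.sin ((b - a) / 2)) := by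
    rw [Real.cos_sub_cos, show (b - a) / 2 = -((a - b) / 2) by ring, Real.sin_neg]; ring
  have h1 : Real.sin ((a + b) / 2) ≤ (a + b) / 2 := Real.sin_le (by linarith)
  have h2 : Real.sin ((b - a) / 2) ≤ (b - a) / 2 := Real.sin_le (by linarith)
  have h3 : 0 ≤ Real.sin ((b - a) / 2) :=
    Real.sin_nonneg_of_nonneg_of_le_pi (by linarith) (by linarith [Real.pi_gt_three])
  have := mul_le_mul h1 h2 h3 (by linarith)
  rw [h]
  nlinarith

lemma pairEnergy_le {ε a b : ℝ} (ha : 0 ≤ a) (hab : a ≤ b) (hb : b ≤ ε) (hε : ε ≤ 1) :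
    pairEnergy (Real.cos ε) a b ≤ (ε ^ 2 - a ^ 2) ^ 2 / 2 + (b - a) ^ 2 / 2 := by
  rw [pairEnergy_eq]
  have hpi := Real.pi_gt_three
  have h1 : Real.cos ((a + b) / 2) - Real.cos ε ≤ (ε ^ 2 - a ^ 2) / 2 := by
    have := cos_sub_cos_le (a := (a + b) / 2) (b := ε) (by linarith) (by linarith) hε
    nlinarith
  have h2 : 0 ≤ Real.cos ((a + b) / 2) - Real.cos ε := by
    linarith [Real.cos_le_cos_of_nonneg_of_le_pi (x := (a + b) / 2) (y := ε) (by linarith)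
      (by linarith) (by linarith)]
  have h3 : 1 - Real.cos ((b - a) / 2) ≤ (b - a) ^ 2 / 8 := by
    have := Real.one_sub_sq_div_two_le_cos (x := (b - a) / 2)
    linarith
  have h4 : 0 ≤ 1 - Real.cos ((b - a) / 2) := by linarith [Real.cos_le_one ((b - a) / 2)]
  have h5 : 0 ≤ Real.cos ε := Real.cos_nonneg_of_mem_Icc ⟨by linarith, by linarith⟩
  have h6 : Real.cos ε * Real.cos ((a + b) / 2) ≤ 1 :=
    mul_le_one₀ (Real.cos_le_one _) (by linarith) (Real.cos_le_one _)
  have h7 := pow_le_pow_left₀ h2 h1 2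
  nlinarith [mul_le_mul_of_nonneg_right h6 h4]

/-- The right half of the competitor: the Euler profile, cut off to `ε` from index `N` on. -/
def cutProfile (ε : ℝ) (N n : ℕ) : ℝ := if n < N then profile ε n else ε

/-- Potential bounding the competitor's energy: an antiderivative of `ε ^ 2 - t ^ 2`, with a linear
correction for the error of the left Riemann sum. -/
def upperPot (ε t : ℝ) : ℝ := ε ^ 2 * t - t ^ 3 / 3 + 2 * ε ^ 3 * t

lemma pairEnergy_cutProfile_le {ε : ℝ} (h0 : 0 < ε) (h1 : ε ≤ 1 / 2) {N : ℕ}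
    (hN : ∀ n, N ≤ n + 1 → ε - profile ε n ≤ ε ^ 2) (n : ℕ) :
    pairEnergy (Real.cos ε) (cutProfile ε N n) (cutProfile ε N (n + 1)) ≤
      (upperPot ε (cutProfile ε N (n + 1)) + if n + 1 < N then 0 else 3 * ε ^ 4)
        - (upperPot ε (cutProfile ε N n) + if n < N then 0 else 3 * ε ^ 4) := by
  obtain ⟨ha, hb, -⟩ := profile_bounds h0.le h1 n
  obtain ⟨ha', hb', -⟩ := profile_bounds h0.le h1 (n + 1)
  have hs : profile ε (n + 1) = profile ε n + (ε ^ 2 - profile ε n ^ 2) := rfl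
  unfold cutProfile
  by_cases hn : n + 1 < N
  · have hn' : n < N := by omega
    simp only [hn, hn', if_true]
    generalize profile ε (n + 1) = b at *
    generalize profile ε n = a at *
    have hba : b - a = ε ^ 2 - a ^ 2 := by linarith
    have hab : 0 ≤ b - a := by nlinarith
    have hE := pairEnergy_le ha (by linarith) hb' (by linarith)
    rw [← hba] at hE
    have hsq : (b ^ 2 - a ^ 2) ≤ 2 * ε ^ 3 := by
      have : b - a ≤ ε ^ 2 := by nlinarith
      nlinarith [mul_le_mul this (show a + b ≤ 2 * ε by linarith) (by linarith) (by positivity)]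
    have key : (b - a) * (b - a) ≤ upperPot ε b - upperPot ε a := by
      have e : upperPot ε b - upperPot ε a
          = (b - a) * (ε ^ 2 - (a ^ 2 + a * b + b ^ 2) / 3 + 2 * ε ^ 3) := by
        unfold upperPot; ring
      rw [e]
      apply mul_le_mul_of_nonneg_left _ hab
      nlinarith
    nlinarith
  · simp only [hn, if_false]
    by_cases hn' : n < N
    · have hgap := hN n (by omega)
      simp only [hn', if_true]
      generalize profile ε n = a at *
      have hE := pairEnergy_le ha hb le_rfl (by linarith : ε ≤ 1)
      have hg0 : 0 ≤ ε - a := by linarith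
      have hg2 : (ε - a) ^ 2 ≤ ε ^ 4 := by
        have := pow_le_pow_left₀ hg0 hgap 2
        nlinarith
      have hg3 : (ε ^ 2 - a ^ 2) ^ 2 ≤ ε ^ 4 := by
        have : ε + a ≤ 1 := by linarith
        have : (ε + a) ^ 2 ≤ 1 := by nlinarith
        nlinarith [mul_le_mul_of_nonneg_right this (sq_nonneg (ε - a))]
      have e : upperPot ε ε - upperPot ε a
          = (ε - a) * (ε ^ 2 - (a ^ 2 + a * ε + ε ^ 2) / 3 + 2 * ε ^ 3) := by
        unfold upperPot; ring
      have hp : 0 ≤ upperPot ε ε - upperPot ε a := by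
        rw [e]
        apply mul_nonneg hg0
        have : 0 < ε ^ 3 := by positivity
        nlinarith
      have : 0 < ε ^ 4 := by positivity
      linarith
    · simp only [hn', if_false]
      have := pairEnergy_le h0.le le_rfl le_rfl (by linarith : ε ≤ 1)
      simpa using this

lemma crease_le {α : ℝ} (hα0 : 0 ≤ α) (hα1 : α < 4) (hε1 : thetaMin α ≤ 1 / 2) :
    crease α ≤ ENNReal.ofReal (4 / 3 * thetaMin α ^ 3 + 10 * thetaMin α ^ 4) := by
  have hcos : Real.cos (thetaMin α) = α / 4 := Real.cos_arccos (by linarith) (by linarith)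
  have h0 : 0 < thetaMin α := Real.arccos_pos.2 (by linarith)
  generalize hε : thetaMin α = ε at *
  obtain ⟨M, hM⟩ : ∃ M : ℕ, (1 - ε) ^ M < ε :=
    exists_pow_lt_of_lt_one h0 (by linarith)
  have hN : ∀ n, M + 1 ≤ n + 1 → ε - profile ε n ≤ ε ^ 2 := fun n hn => by
    have h := (profile_bounds h0.le hε1 n).2.2
    have h2 : (1 - ε) ^ n ≤ (1 - ε) ^ M :=
      pow_le_pow_of_le_one (by linarith) (by linarith) (by omega)
    nlinarith
  let θ : ℤ → ℝ := fun i => (i.sign : ℝ) * cutProfile ε (M + 1) i.natAbs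
  have hcut : ∀ n, 0 ≤ cutProfile ε (M + 1) n ∧ cutProfile ε (M + 1) n ≤ ε := fun n => by
    unfold cutProfile
    split_ifs
    · exact ⟨(profile_bounds h0.le hε1 n).1, (profile_bounds h0.le hε1 n).2.1⟩
    · exact ⟨h0.le, le_rfl⟩
  have hcut0 : cutProfile ε (M + 1) 0 = 0 := by simp [cutProfile, profile]
  have hnat : ∀ n : ℕ, θ n = cutProfile ε (M + 1) n := fun n => by
    rcases Nat.eq_zero_or_pos n with rfl | hn
    · simp [θ, hcut0]
    · simp [θ, Int.sign_eq_one_of_pos (show (0 : ℤ) < n by omega)]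
  have hneg : ∀ i, θ (-i) = -θ i := fun i => by simp [θ]
  have hmem : ∀ i, θ i ∈ Set.Icc (-(π / 2)) (π / 2) := by
    have hp := Real.pi_gt_three
    intro i
    obtain ⟨n, rfl | rfl⟩ := Int.eq_nat_or_neg i
    · rw [hnat]; constructor <;> linarith [hcut n]
    · rw [hneg, hnat]; constructor <;> linarith [hcut n]
  have hbd : ∀ i : ℤ, ((M + 1 : ℕ) : ℤ) ≤ |i| → θ i = (i.sign : ℝ) * thetaMin α := fun i hi => by
    have : ¬ i.natAbs < M + 1 := by
      rw [Int.abs_eq_natAbs] at hi; omega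
    simp only [θ, cutProfile, if_neg this, hε]
  have hle : crease α ≤ creaseSum α θ := sInf_le ⟨M + 1, θ, hmem, hbd, rfl⟩
  refine hle.trans ?_
  have hpos : ∀ n : ℕ, creaseSummand α θ n
      = pairEnergy (Real.cos ε) (cutProfile ε (M + 1) n) (cutProfile ε (M + 1) (n + 1)) :=
    fun n => by
      rw [creaseSummand_eq, hcos, hnat, ← hnat (n + 1)]; push_cast; rfl
  have hrefl : ∀ n : ℕ, creaseSummand α θ (-((n : ℤ) + 1)) = creaseSummand α θ n := fun n => by
    rw [creaseSummand_eq, creaseSummand_eq, show -((n : ℤ) + 1) + 1 = -n by ring, hneg, hneg,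
      pairEnergy_neg_swap]
  have hhalf : ∑' n : ℕ, ENNReal.ofReal (creaseSummand α θ n)
      ≤ ENNReal.ofReal (2 / 3 * ε ^ 3 + 5 * ε ^ 4) := by
    refine ENNReal.tsum_le_of_sum_range_le fun n => ?_
    rw [← ENNReal.ofReal_sum_of_nonneg (fun i _ => by
      rw [creaseSummand_eq]
      exact pairEnergy_nonneg (by linarith) (hmem _) (hmem _))]
    apply ENNReal.ofReal_le_ofReal
    have hs := Finset.sum_le_sum (s := Finset.range n)
      (fun k _ => pairEnergy_cutProfile_le h0 hε1 hN k)
    rw [Finset.sum_range_sub (fun k => upperPot ε (cutProfile ε (M + 1) k)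
      + if k < M + 1 then 0 else 3 * ε ^ 4)] at hs
    simp only [hpos]
    refine hs.trans ?_
    have hpot : upperPot ε (cutProfile ε (M + 1) n) ≤ 2 / 3 * ε ^ 3 + 2 * ε ^ 4 := by
      obtain ⟨ha, hb⟩ := hcut n
      generalize cutProfile ε (M + 1) n = a at *
      have e : 2 / 3 * ε ^ 3 + 2 * ε ^ 4 - upperPot ε a
          = (ε - a) * (ε ^ 2 - (a ^ 2 + a * ε + ε ^ 2) / 3 + 2 * ε ^ 3) := by
        unfold upperPot; ring
      have : 0 ≤ 2 / 3 * ε ^ 3 + 2 * ε ^ 4 - upperPot ε a := by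
        rw [e]
        apply mul_nonneg (by linarith)
        have : 0 < ε ^ 3 := by positivity
        nlinarith
      linarith
    have h4 : 0 < ε ^ 4 := by positivity
    have hif : (if n < M + 1 then 0 else 3 * ε ^ 4) ≤ 3 * ε ^ 4 := by
      split_ifs <;> linarith
    rw [hcut0]
    simp only [upperPot, Nat.succ_pos, if_true] at hpot ⊢
    linarith
  unfold creaseSum
  rw [tsum_of_nat_of_neg_add_one ENNReal.summable ENNReal.summable]
  simp only [hrefl]
  calc _ ≤ ENNReal.ofReal (2 / 3 * ε ^ 3 + 5 * ε ^ 4)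
        + ENNReal.ofReal (2 / 3 * ε ^ 3 + 5 * ε ^ 4) := add_le_add hhalf hhalf
    _ = _ := by
      rw [← ENNReal.ofReal_add (by positivity) (by positivity)]
      ring_nf

/-! ### The limit -/

lemma tendsto_thetaMin : Tendsto thetaMin (𝓝[<] (4 : ℝ)) (𝓝 0) := by
  have h : Continuous thetaMin := Real.continuous_arccos.comp (continuous_id.div_const 4)
  have := (h.tendsto 4).mono_left (nhdsWithin_le_nhds (s := Set.Iio 4))
  simpa [thetaMin] using this

lemma denominator_eq {α : ℝ} (hα0 : 0 ≤ α) (hα1 : α < 4) :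
    Real.sqrt 2 * (4 - α) ^ ((3 : ℝ) / 2) = 32 * Real.sin (thetaMin α / 2) ^ 3 := by
  have hcos : Real.cos (thetaMin α) = α / 4 := Real.cos_arccos (by linarith) (by linarith)
  have hs0 : 0 ≤ Real.sin (thetaMin α / 2) :=
    Real.sin_nonneg_of_nonneg_of_le_pi (div_nonneg (Real.arccos_nonneg _) zero_le_two)
      (by have := Real.arccos_le_pi (α / 4); unfold thetaMin; linarith [Real.pi_pos])
  have h2 : Real.sqrt 2 ^ 2 = 2 := Real.sq_sqrt (by norm_num)
  have h : 4 - α = (2 * Real.sqrt 2 * Real.sin (thetaMin α / 2)) ^ 2 := by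
    have h3 : Real.cos (thetaMin α) = 1 - 2 * Real.sin (thetaMin α / 2) ^ 2 := by
      conv_lhs => rw [show thetaMin α = 2 * (thetaMin α / 2) by ring, Real.cos_two_mul]
      linarith [Real.sin_sq_add_cos_sq (thetaMin α / 2)]
    rw [mul_pow, mul_pow, h2]
    linarith
  rw [h, ← Real.rpow_natCast, ← Real.rpow_mul (by positivity),
    show ((2 : ℕ) : ℝ) * (3 / 2) = (3 : ℕ) by norm_num, Real.rpow_natCast]
  linear_combination (8 * (Real.sqrt 2 ^ 2 + 2) * Real.sin (thetaMin α / 2) ^ 3) * h2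

/-- In terms of the minimal angle, the crease energy is asymptotic to `(4 / 3) θ_α ^ 3`. -/
lemma tendsto_crease_div :
    Tendsto (fun α : ℝ => (crease α).toReal / thetaMin α ^ 3) (𝓝[<] (4 : ℝ)) (𝓝 (4 / 3)) := by
  have hε := tendsto_thetaMin
  have hlt : ∀ᶠ α : ℝ in 𝓝[<] (4 : ℝ), α < 4 := eventually_mem_nhdsWithin
  have hpos : ∀ᶠ α : ℝ in 𝓝[<] (4 : ℝ), 0 < thetaMin α :=
    hlt.mono fun α h => Real.arccos_pos.2 (by linarith)
  have hgt : ∀ x : ℝ, x < 4 → ∀ᶠ α : ℝ in 𝓝[<] (4 : ℝ), x < α := fun x hx =>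
    nhdsWithin_le_nhds (lt_mem_nhds hx)
  have hsmall : ∀ᶠ α : ℝ in 𝓝[<] (4 : ℝ), thetaMin α < 1 / 2 :=
    hε.eventually_lt_const (by norm_num)
  rw [tendsto_order]
  constructor
  · intro L hL
    -- First `η`, then `α`, is chosen so that `(4 / 3 - 4 ε) / (1 + 8 η)` exceeds `L`.
    obtain ⟨η, hη, hη8, hηL⟩ : ∃ η : ℝ, 0 < η ∧ η ≤ 1 / 8 ∧ L * (1 + 8 * η) < 4 / 3 := by
      have hc : Tendsto (fun η : ℝ => L * (1 + 8 * η)) (𝓝[>] 0) (𝓝 L) := by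
        have : Continuous (fun η : ℝ => L * (1 + 8 * η)) := by fun_prop
        simpa using (this.tendsto 0).mono_left (nhdsWithin_le_nhds (s := Set.Ioi 0))
      have h8 : ∀ᶠ η : ℝ in 𝓝[>] 0, η < 1 / 8 := nhdsWithin_le_nhds (gt_mem_nhds (by norm_num))
      obtain ⟨η, h1, h2, h3⟩ :=
        ((hc.eventually_lt_const hL).and (h8.and eventually_mem_nhdsWithin)).exists
      exact ⟨η, h3, h2.le, h1⟩
    have hlim1 : Tendsto (fun α => L * (1 + 8 * η) + 4 * thetaMin α) (𝓝[<] (4 : ℝ))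
        (𝓝 (L * (1 + 8 * η))) := by
      simpa using (hε.const_mul 4).const_add (L * (1 + 8 * η))
    have hlim2 : Tendsto (fun α => L * thetaMin α ^ 3) (𝓝[<] (4 : ℝ)) (𝓝 0) := by
      simpa using (hε.pow 3).const_mul L
    filter_upwards [hlt, hpos, hsmall, hgt (4 * (1 - η)) (by linarith), hgt 0 (by norm_num),
      hlim1.eventually_lt_const hηL,
      hlim2.eventually_lt_const (show (0 : ℝ) < 2 * η ^ 2 by positivity)]
      with α h4 hp hs hαη hα0 hl1 hl2
    have hcos : Real.cos (thetaMin α) = α / 4 := Real.cos_arccos (by linarith) (by linarith)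
    have hne : crease α ≠ ⊤ :=
      ne_top_of_le_ne_top ENNReal.ofReal_ne_top (crease_le hα0.le h4 hs.le)
    have hle := (ENNReal.ofReal_le_iff_le_toReal hne).1
      (le_crease hη hη8 (by linarith) (by linarith : α / 4 ≤ 1))
    rw [lt_div_iff₀ (by positivity)]
    refine lt_of_lt_of_le (lt_min hl2 ?_) hle
    rw [lt_div_iff₀ (by linarith)]
    have h1 := Real.sin_gt_sub_cube hp
    have h2 := (abs_le.1 (Real.cos_bound (x := thetaMin α) (by rw [abs_of_pos hp]; linarith))).2
    rw [abs_of_pos hp, hcos] at h2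
    generalize thetaMin α = ε at *
    have h3 : α / 4 * ε ≤ (1 - ε ^ 2 / 2 + ε ^ 4 * (5 / 96)) * ε := by
      apply mul_le_mul_of_nonneg_right _ hp.le
      linarith
    have h5 : ε ^ 5 ≤ ε ^ 4 := pow_le_pow_of_le_one hp.le (by linarith) (by norm_num)
    have h6 : 0 < ε ^ 3 := by positivity
    have h7 : 0 < ε ^ 4 := by positivity
    nlinarith [mul_lt_mul_of_pos_right hl1 h6]
  · intro U hU
    have hlim : Tendsto (fun α => 4 / 3 + 10 * thetaMin α) (𝓝[<] (4 : ℝ)) (𝓝 (4 / 3)) := by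
      simpa using (hε.const_mul 10).const_add (4 / 3)
    filter_upwards [hlt, hpos, hsmall, hgt 0 (by norm_num), hlim.eventually_lt_const hU]
      with α h4 hp hs hα0 hu
    have hle := ENNReal.toReal_le_of_le_ofReal (by positivity) (crease_le hα0.le h4 hs.le)
    rw [div_lt_iff₀ (by positivity)]
    have h6 : 0 < thetaMin α ^ 3 := by positivity
    nlinarith [mul_lt_mul_of_pos_right hu h6]

/-- asymptotics of the crease energy at the transition point:
`lim_{α→4⁻} 3 C_α / (√2 (4 − α)^{3/2}) = 1`, i.e. `C_α ∼ (√2/3)(4 − α)^{3/2}`. -/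
theorem crease_energy_asymptotics :
    Filter.Tendsto
      (fun α : ℝ => 3 * (crease α).toReal / (Real.sqrt 2 * (4 - α) ^ ((3 : ℝ) / 2)))
      (𝓝[<] (4 : ℝ)) (𝓝 1) := by
  have hsinc : Tendsto (fun α => Real.sinc (thetaMin α / 2)) (𝓝[<] (4 : ℝ)) (𝓝 1) := by
    have h : Tendsto (fun α => thetaMin α / 2) (𝓝[<] (4 : ℝ)) (𝓝 0) := by
      simpa using tendsto_thetaMin.div_const 2
    simpa [Function.comp_def] using (Real.continuous_sinc.tendsto 0).comp h
  have hlim := (tendsto_crease_div.const_mul (3 / 4)).div (hsinc.pow 3) (by norm_num)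
  norm_num at hlim
  refine hlim.congr' ?_
  have hlt : ∀ᶠ α : ℝ in 𝓝[<] (4 : ℝ), α < 4 := eventually_mem_nhdsWithin
  have hgt : ∀ᶠ α : ℝ in 𝓝[<] (4 : ℝ), 0 < α := nhdsWithin_le_nhds (lt_mem_nhds (by norm_num))
  filter_upwards [hlt, hgt] with α h4 h0
  have hp : 0 < thetaMin α := Real.arccos_pos.2 (by linarith)
  have hs : 0 < Real.sin (thetaMin α / 2) :=
    Real.sin_pos_of_pos_of_lt_pi (by linarith)
      (by have := Real.arccos_le_pi (α / 4); unfold thetaMin; linarith [Real.pi_pos])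
  rw [denominator_eq h0.le h4]
  simp only [Pi.div_apply, Real.sinc_of_ne_zero (show thetaMin α / 2 ≠ 0 by positivity)]
  field_simp
  ring
end
end
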